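/- arXiv:2212.00516 — 3 statements merged into one kernel-verified Lean document; each statement's English description precedes it below -/
import Mathlib

section
/- Let A be a nonempty type, ε = (ε_n)_{n≥0} a sequence in A, and define finite words W_0 = [] (the empty word) and W_{n+1} = W_n · [ε_n] · W_n (concatenation). Then for every m ≥ 0 and every index n with n < 2^m − 1, the n-th letter (0-indexed) of W_m equals ε_{v₂(n+1)}, where v₂(k) denotes the 2-adic valuation of k (the exponent of the largest power of 2 dividing k). -/
/-- The words `W 0 = []`, `W (n+1) = W n ++ [ε n] ++ W n`. -/
def W {A : Type*} (ε : ℕ → A) : ℕ → List A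
  | 0 => []
  | n + 1 => W ε n ++ [ε n] ++ W ε n

/-!
Numbering letters from `1`, the word `W m` lists `ε (v₂ k)` for `k = 1, …, 2 ^ m - 1`. Indeed the
positions of `W (m + 1)` split as `1, …, 2 ^ m - 1`, then `2 ^ m`, whose valuation is `m`, then
`2 ^ m + k` for `0 < k < 2 ^ m`, where the ultrametric property gives `v₂ (2 ^ m + k) = v₂ k`.
-/

theorem padicValNat_add_of_pow_dvd_of_not_pow_dvd {p m a b : ℕ} (ha : p ^ m ∣ a)
    (hb : ¬p ^ m ∣ b) : padicValNat p (a + b) = padicValNat p b := by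
  have hlt : emultiplicity (p : ℤ) b < emultiplicity (p : ℤ) a := by
    rw [Int.natCast_emultiplicity, Int.natCast_emultiplicity]
    exact (emultiplicity_lt_iff_not_dvd.2 hb).trans_le (le_emultiplicity_of_pow_dvd ha)
  have hadd : emultiplicity p (a + b) = emultiplicity p b := by
    exact_mod_cast emultiplicity_add_of_gt hlt
  rw [← Nat.toNat_emultiplicity, hadd, Nat.toNat_emultiplicity]

theorem padicValNat_pow_add_of_lt {p m k : ℕ} (hk : 0 < k) (hkm : k < p ^ m) :
    padicValNat p (p ^ m + k) = padicValNat p k :=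
  padicValNat_add_of_pow_dvd_of_not_pow_dvd dvd_rfl (Nat.not_dvd_of_pos_of_lt hk hkm)

theorem range'_one_two_mul_sub_one {N : ℕ} (hN : 0 < N) :
    List.range' 1 (2 * N - 1) =
      List.range' 1 (N - 1) ++ [N] ++ (List.range' 1 (N - 1)).map (N + ·) := by
  obtain ⟨r, rfl⟩ : ∃ r, N = r + 1 := Nat.exists_eq_add_one.2 hN
  have hlen : 2 * (r + 1) - 1 = r + 1 + r := by lia
  rw [hlen, ← List.range'_append_1, List.range'_1_concat, List.map_add_range',
    Nat.add_sub_cancel, Nat.add_comm 1 r, Nat.add_comm 1 (r + 1)]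

theorem W_eq_map_range' {A : Type*} (ε : ℕ → A) (m : ℕ) :
    W ε m = (List.range' 1 (2 ^ m - 1)).map fun k ↦ ε (padicValNat 2 k) := by
  induction m with
  | zero => rfl
  | succ m ih =>
    have hshift : (List.range' 1 (2 ^ m - 1)).map (fun k ↦ ε (padicValNat 2 (2 ^ m + k))) =
        W ε m := by
      rw [ih]
      refine List.map_congr_left fun k hk ↦ ?_
      rw [List.mem_range'_1] at hk
      rw [padicValNat_pow_add_of_lt (by lia) (by lia)]
    rw [pow_succ', range'_one_two_mul_sub_one (by positivity), List.map_append, List.map_append,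
      List.map_map, ← ih, List.map_singleton, padicValNat.prime_pow]
    exact congrArg (W ε m ++ [ε m] ++ ·) hshift.symm

/-- For every `m` and every index `n < 2^m - 1`, the `n`-th letter (0-indexed) of `W m`
is `ε (v₂ (n+1))`, where `v₂` is the 2-adic valuation. -/
theorem letter_of_W_eq {A : Type*} [Nonempty A] (ε : ℕ → A) :
    ∀ m n : ℕ, n < 2 ^ m - 1 →
      (W ε m)[n]? = some (ε (padicValNat 2 (n + 1))) := by
  intro m n hn
  rw [W_eq_map_range', List.getElem?_map, List.getElem?_range' hn, Option.map_some, one_mul,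
    Nat.add_comm 1 n]
end

section
/- Let ε = (ε_n)_{n≥0} be a sequence of nonconstant polynomials in 𝔽₂[t] and let s_k = ε_{v₂(k+1)} for k ≥ 0, where v₂ is the 2-adic valuation. Define continued-fraction numerators and denominators in 𝔽₂[t] by x_0 = 1, x_1 = s_0, x_{k+1} = s_k x_k + x_{k−1}, and y_0 = 0, y_1 = 1, y_{k+1} = s_k y_k + y_{k−1}. Define u_1 = ε_0, v_1 = 1, u_{n+1} = ε_n u_n², v_{n+1} = ε_n u_n v_n + 1. Then for all n ≥ 1, x_{2^n − 1} = u_n and y_{2^n − 1} = v_n; in particular x_{2^{n+1} − 1} = ε_n x_{2^n − 1}² and y_{2^{n+1} − 1} = ε_n x_{2^n − 1} y_{2^n − 1} + 1. -/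
/-- `u 1 = ε 0`, `u (n+1) = ε n * (u n)^2`. -/
noncomputable def u (ε : ℕ → Polynomial (ZMod 2)) : ℕ → Polynomial (ZMod 2)
  | 0 => 1
  | n + 1 => ε n * u ε n ^ 2

/-- `v 1 = 1`, `v (n+1) = ε n * u n * v n + 1`. -/
noncomputable def v (ε : ℕ → Polynomial (ZMod 2)) : ℕ → Polynomial (ZMod 2)
  | 0 => 0
  | n + 1 => ε n * u ε n * v ε n + 1

/-- Continued fraction numerators: `x 0 = 1`, `x 1 = s 0`, `x (k+2) = s (k+1) * x (k+1) + x k`. -/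
noncomputable def cfNum (s : ℕ → Polynomial (ZMod 2)) : ℕ → Polynomial (ZMod 2)
  | 0 => 1
  | 1 => s 0
  | k + 2 => s (k + 1) * cfNum s (k + 1) + cfNum s k

/-- Continued fraction denominators: `y 0 = 0`, `y 1 = 1`, `y (k+2) = s (k+1) * y (k+1) + y k`. -/
noncomputable def cfDen (s : ℕ → Polynomial (ZMod 2)) : ℕ → Polynomial (ZMod 2)
  | 0 => 0
  | 1 => 1
  | k + 2 => s (k + 1) * cfDen s (k + 1) + cfDen s k

/-!
The sequence `s` is a ruler sequence: its prefix `w n` of length `2 ^ n - 1` satisfies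
`w (n + 1) = w n, ε n, w n`. Multiplying the matrices `!![s k, 1; 1, 0]` along these prefixes gives
`M (n + 1) = M n * !![ε n, 1; 1, 0] * M n`. Each `M n` is symmetric, being the product over a
palindrome, and has determinant `1` in characteristic two. For such a matrix with first column
`(x, y)`, the first column of `M (n + 1)` is `(ε n * x ^ 2, ε n * x * y + 1)`.
-/

section RulerSequence

/-- The sequence obtained from `ε` by composing with the ruler function, that is, with the 2-adic
valuation shifted so that the sequence is indexed from `0`. -/
def rulerSequence {α : Type*} (ε : ℕ → α) (k : ℕ) : α :=
  ε (padicValNat 2 (k + 1))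

theorem padicValNat_add_eq_right_of_pow_dvd {p n a b : ℕ} [Fact p.Prime] (ha : p ^ n ∣ a)
    (hb : b ≠ 0) (hbn : b < p ^ n) : padicValNat p (a + b) = padicValNat p b := by
  have dvd_add_iff {m : ℕ} (hm : m ≤ n) : p ^ m ∣ a + b ↔ p ^ m ∣ b :=
    Nat.dvd_add_right ((pow_dvd_pow p hm).trans ha)
  have val_lt : padicValNat p b < n := by
    rw [← not_le, ← padicValNat_dvd_iff_le hb]
    exact Nat.not_dvd_of_pos_of_lt hb.bot_lt hbn
  rw [← Nat.cast_inj (R := ℕ∞), padicValNat_eq_emultiplicity (by lia), emultiplicity_eq_coe,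
    dvd_add_iff val_lt.le, dvd_add_iff val_lt]
  exact ⟨pow_padicValNat_dvd, pow_succ_padicValNat_not_dvd hb⟩

theorem rulerSequence_two_pow_sub_one {α : Type*} (ε : ℕ → α) (n : ℕ) :
    rulerSequence ε (2 ^ n - 1) = ε n := by
  rw [rulerSequence, Nat.sub_add_cancel Nat.one_le_two_pow, padicValNat.prime_pow]

theorem rulerSequence_two_pow_add {α : Type*} (ε : ℕ → α) {n i : ℕ} (hi : i + 1 < 2 ^ n) :
    rulerSequence ε (2 ^ n + i) = rulerSequence ε i :=
  congrArg ε (padicValNat_add_eq_right_of_pow_dvd dvd_rfl i.succ_ne_zero hi)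

theorem map_rulerSequence_range_two_pow_succ_sub_one {α : Type*} (ε : ℕ → α) (n : ℕ) :
    (List.range (2 ^ (n + 1) - 1)).map (rulerSequence ε) =
      (List.range (2 ^ n - 1)).map (rulerSequence ε) ++
        ε n :: (List.range (2 ^ n - 1)).map (rulerSequence ε) := by
  have one_le : 1 ≤ 2 ^ n := Nat.one_le_two_pow
  have length_eq : 2 ^ (n + 1) - 1 = 2 ^ n - 1 + 1 + (2 ^ n - 1) := by lia
  have second_half : (List.range (2 ^ n - 1)).map (fun i ↦ rulerSequence ε (2 ^ n + i)) =
      (List.range (2 ^ n - 1)).map (rulerSequence ε) :=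
    List.map_congr_left fun i hi ↦
      rulerSequence_two_pow_add ε (by rw [List.mem_range] at hi; lia)
  rw [length_eq, List.range_add, List.range_succ, Nat.sub_add_cancel one_le]
  simp only [List.map_append, List.map_map, Function.comp_def, List.map_cons,
    rulerSequence_two_pow_sub_one, second_half, List.append_assoc, List.singleton_append]

end RulerSequence

section ConvergentMatrix

variable {R : Type*}

/-- The elementary continued fraction matrix of the partial quotient `a`, which represents the
Möbius transformation `z ↦ a + 1 / z`. -/
def partialQuotientMatrix [Zero R] [One R] (a : R) : Matrix (Fin 2) (Fin 2) R :=
  !![a, 1; 1, 0]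

/-- The product of the elementary matrices of the first `k` partial quotients. Its first column is
the `k`-th convergent of `[s 0, s 1, …]`, with the numerator on top, and its second column is the
preceding convergent. -/
def convergentMatrix [Semiring R] (s : ℕ → R) (k : ℕ) : Matrix (Fin 2) (Fin 2) R :=
  (((List.range k).map s).map partialQuotientMatrix).prod

theorem isSymm_partialQuotientMatrix [Zero R] [One R] (a : R) :
    (partialQuotientMatrix a).IsSymm := by
  simp [partialQuotientMatrix, Matrix.IsSymm.ext_iff, Fin.forall_fin_two]

theorem det_partialQuotientMatrix [CommRing R] (a : R) : (partialQuotientMatrix a).det = -1 := by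
  simp [partialQuotientMatrix, Matrix.det_fin_two_of]

theorem convergentMatrix_zero [Semiring R] (s : ℕ → R) : convergentMatrix s 0 = 1 := rfl

theorem convergentMatrix_succ [Semiring R] (s : ℕ → R) (k : ℕ) :
    convergentMatrix s (k + 1) = convergentMatrix s k * partialQuotientMatrix (s k) := by
  simp only [convergentMatrix, List.map_map, List.prod_range_succ, Function.comp_apply]

theorem convergentMatrix_succ_apply_one [Semiring R] (s : ℕ → R) (k : ℕ) (i : Fin 2) :
    convergentMatrix s (k + 1) i 1 = convergentMatrix s k i 0 := by
  simp [convergentMatrix_succ, partialQuotientMatrix, Matrix.mul_apply]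

theorem convergentMatrix_add_two_apply_zero [CommSemiring R] (s : ℕ → R) (k : ℕ) (i : Fin 2) :
    convergentMatrix s (k + 2) i 0 =
      s (k + 1) * convergentMatrix s (k + 1) i 0 + convergentMatrix s k i 0 := by
  rw [← convergentMatrix_succ_apply_one s k, convergentMatrix_succ s (k + 1)]
  simp [partialQuotientMatrix, Matrix.mul_apply, mul_comm]

theorem convergentMatrix_apply_zero_eq [CommSemiring R] {s x : ℕ → R} {i : Fin 2}
    (x_zero : convergentMatrix s 0 i 0 = x 0) (x_one : convergentMatrix s 1 i 0 = x 1)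
    (x_add_two : ∀ k, x (k + 2) = s (k + 1) * x (k + 1) + x k) (k : ℕ) :
    convergentMatrix s k i 0 = x k := by
  induction k using Nat.twoStepInduction with
  | zero => exact x_zero
  | one => exact x_one
  | more k ih ih_succ => rw [convergentMatrix_add_two_apply_zero, ih, ih_succ, x_add_two]

theorem det_convergentMatrix [CommRing R] (s : ℕ → R) (k : ℕ) :
    (convergentMatrix s k).det = (-1) ^ k := by
  induction k with
  | zero => rw [convergentMatrix_zero, Matrix.det_one, pow_zero]
  | succ k ih => rw [convergentMatrix_succ, Matrix.det_mul, ih, det_partialQuotientMatrix, pow_succ]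

theorem convergentMatrix_rulerSequence_two_pow_succ_sub_one [Semiring R] (ε : ℕ → R) (n : ℕ) :
    convergentMatrix (rulerSequence ε) (2 ^ (n + 1) - 1) =
      convergentMatrix (rulerSequence ε) (2 ^ n - 1) * partialQuotientMatrix (ε n) *
        convergentMatrix (rulerSequence ε) (2 ^ n - 1) := by
  simp only [convergentMatrix, map_rulerSequence_range_two_pow_succ_sub_one, List.map_append,
    List.map_cons, List.prod_append, List.prod_cons, mul_assoc]

theorem isSymm_convergentMatrix_rulerSequence [CommSemiring R] (ε : ℕ → R) (n : ℕ) :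
    (convergentMatrix (rulerSequence ε) (2 ^ n - 1)).IsSymm := by
  induction n with
  | zero => exact Matrix.isSymm_one
  | succ n ih =>
    rw [convergentMatrix_rulerSequence_two_pow_succ_sub_one, Matrix.IsSymm, Matrix.transpose_mul,
      Matrix.transpose_mul, ih.eq, (isSymm_partialQuotientMatrix _).eq, mul_assoc]

end ConvergentMatrix

section CharTwo

variable {R : Type*} [CommRing R] [CharP R 2]

theorem mul_partialQuotientMatrix_mul_self_apply_zero_zero {M : Matrix (Fin 2) (Fin 2) R}
    (hM : M.IsSymm) (a : R) : (M * partialQuotientMatrix a * M) 0 0 = a * M 0 0 ^ 2 := by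
  simp only [partialQuotientMatrix, Matrix.mul_apply, Fin.sum_univ_two, Matrix.of_apply,
    Matrix.cons_val_zero, Matrix.cons_val_one, Matrix.cons_val', Matrix.cons_val_fin_one,
    hM.apply 0 1]
  linear_combination M 0 0 * M 0 1 * CharTwo.two_eq_zero (R := R)

theorem mul_partialQuotientMatrix_mul_self_apply_one_zero {M : Matrix (Fin 2) (Fin 2) R}
    (hM : M.IsSymm) (a : R) :
    (M * partialQuotientMatrix a * M) 1 0 = a * M 0 0 * M 1 0 + M.det := by
  simp only [partialQuotientMatrix, Matrix.mul_apply, Fin.sum_univ_two, Matrix.of_apply,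
    Matrix.cons_val_zero, Matrix.cons_val_one, Matrix.cons_val', Matrix.cons_val_fin_one,
    Matrix.det_fin_two, hM.apply 0 1]
  linear_combination M 0 1 ^ 2 * CharTwo.two_eq_zero (R := R)

theorem det_convergentMatrix_of_charTwo (s : ℕ → R) (k : ℕ) : (convergentMatrix s k).det = 1 := by
  rw [det_convergentMatrix, CharTwo.neg_eq, one_pow]

theorem convergents_at_powers_of_two_general {ε s x y U V : ℕ → R}
    (hs : ∀ k, s k = ε (padicValNat 2 (k + 1)))
    (x_zero : x 0 = 1) (x_one : x 1 = s 0)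
    (x_add_two : ∀ k, x (k + 2) = s (k + 1) * x (k + 1) + x k)
    (y_zero : y 0 = 0) (y_one : y 1 = 1)
    (y_add_two : ∀ k, y (k + 2) = s (k + 1) * y (k + 1) + y k)
    (U_zero : U 0 = 1) (U_succ : ∀ n, U (n + 1) = ε n * U n ^ 2)
    (V_zero : V 0 = 0) (V_succ : ∀ n, V (n + 1) = ε n * U n * V n + 1) (n : ℕ) :
    x (2 ^ n - 1) = U n ∧ y (2 ^ n - 1) = V n ∧
      x (2 ^ (n + 1) - 1) = ε n * x (2 ^ n - 1) ^ 2 ∧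
      y (2 ^ (n + 1) - 1) = ε n * x (2 ^ n - 1) * y (2 ^ n - 1) + 1 := by
  obtain rfl : s = rulerSequence ε := funext hs
  have num_eq := convergentMatrix_apply_zero_eq (i := 0)
    (by simp [convergentMatrix_zero, x_zero])
    (by simp [convergentMatrix_succ, convergentMatrix_zero, partialQuotientMatrix, x_one]) x_add_two
  have den_eq := convergentMatrix_apply_zero_eq (i := 1)
    (by simp [convergentMatrix_zero, y_zero])
    (by simp [convergentMatrix_succ, convergentMatrix_zero, partialQuotientMatrix, y_one]) y_add_two
  have num_doubling (n : ℕ) : x (2 ^ (n + 1) - 1) = ε n * x (2 ^ n - 1) ^ 2 := by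
    rw [← num_eq, ← num_eq, convergentMatrix_rulerSequence_two_pow_succ_sub_one,
      mul_partialQuotientMatrix_mul_self_apply_zero_zero
        (isSymm_convergentMatrix_rulerSequence ε n)]
  have den_doubling (n : ℕ) :
      y (2 ^ (n + 1) - 1) = ε n * x (2 ^ n - 1) * y (2 ^ n - 1) + 1 := by
    rw [← den_eq, ← den_eq, ← num_eq, convergentMatrix_rulerSequence_two_pow_succ_sub_one,
      mul_partialQuotientMatrix_mul_self_apply_one_zero
        (isSymm_convergentMatrix_rulerSequence ε n), det_convergentMatrix_of_charTwo]
  have closed_form : x (2 ^ n - 1) = U n ∧ y (2 ^ n - 1) = V n := by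
    induction n with
    | zero => exact ⟨x_zero.trans U_zero.symm, y_zero.trans V_zero.symm⟩
    | succ n ih => rw [num_doubling, den_doubling, ih.1, ih.2, U_succ, V_succ]; exact ⟨rfl, rfl⟩
  exact ⟨closed_form.1, closed_form.2, num_doubling n, den_doubling n⟩

end CharTwo

/-- With `s k = ε (v₂ (k+1))`, for all `n ≥ 1` one has `x (2^n - 1) = u n` and
`y (2^n - 1) = v n`; in particular `x (2^(n+1) - 1) = ε n * (x (2^n - 1))^2` and
`y (2^(n+1) - 1) = ε n * x (2^n - 1) * y (2^n - 1) + 1`. -/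
theorem convergents_at_powers_of_two (ε : ℕ → Polynomial (ZMod 2))
    (hε : ∀ n, 1 ≤ (ε n).natDegree)
    (s : ℕ → Polynomial (ZMod 2)) (hs : ∀ k, s k = ε (padicValNat 2 (k + 1)))
    (n : ℕ) (hn : 1 ≤ n) :
    cfNum s (2 ^ n - 1) = u ε n ∧ cfDen s (2 ^ n - 1) = v ε n ∧
      cfNum s (2 ^ (n + 1) - 1) = ε n * cfNum s (2 ^ n - 1) ^ 2 ∧
      cfDen s (2 ^ (n + 1) - 1) = ε n * cfNum s (2 ^ n - 1) * cfDen s (2 ^ n - 1) + 1 :=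
  convergents_at_powers_of_two_general hs rfl rfl (fun _ ↦ rfl) rfl rfl (fun _ ↦ rfl)
    rfl (fun _ ↦ rfl) rfl (fun _ ↦ rfl) n
end

section
/- Let ε = (ε_n)_{n≥0} be a sequence of nonconstant polynomials in 𝔽₂[t], and define u_1 = ε_0, v_1 = 1, u_{n+1} = ε_n u_n², v_{n+1} = ε_n u_n v_n + 1. Then in the field of rational functions 𝔽₂(t), for every n ≥ 1, v_n / u_n = Σ_{i=1}^{n} 1/u_i. -/
/-! Dividing `v (n + 1)` by `u (n + 1) = ε n * u n ^ 2`, its first term gives `v n / u n` and its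
second gives `1 / u (n + 1)`, so each step of the recursion adds one term to the sum. Starting at
`u 0 = 1`, `v 0 = 0`, which is consistent with `u 1 = ε 0`, `v 1 = 1`, makes the constant vanish. -/

theorem ne_zero_of_succ_eq_mul_sq {M₀ : Type*} [MonoidWithZero M₀] [NoZeroDivisors M₀]
    {e x : ℕ → M₀} (he : ∀ n, e n ≠ 0) (hx₀ : x 0 ≠ 0)
    (hx : ∀ n, x (n + 1) = e n * x n ^ 2) (n : ℕ) : x n ≠ 0 := by
  induction n with
  | zero => exact hx₀
  | succ n ih => exact hx n ▸ mul_ne_zero (he n) (pow_ne_zero 2 ih)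

theorem mul_mul_add_one_div_mul_sq {K : Type*} [Semifield K] {e x : K} (he : e ≠ 0) (hx : x ≠ 0)
    (y : K) : (e * x * y + 1) / (e * x ^ 2) = y / x + (e * x ^ 2)⁻¹ := by
  have cancel : e * x * y / (e * x ^ 2) = y / x := by
    rw [sq, ← mul_assoc, mul_div_mul_left y x (mul_ne_zero he hx)]
  rw [add_div, cancel, one_div]

theorem v_div_u_eq_sum_general {K : Type*} [Semifield K] {e x y : ℕ → K}
    (he : ∀ n, e n ≠ 0) (hx₀ : x 0 ≠ 0) (hx : ∀ n, x (n + 1) = e n * x n ^ 2)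
    (hy : ∀ n, y (n + 1) = e n * x n * y n + 1) (n : ℕ) :
    y n / x n = y 0 / x 0 + ∑ i ∈ Finset.Icc 1 n, (x i)⁻¹ := by
  induction n with
  | zero => simp
  | succ n ih =>
    have hxn : x n ≠ 0 := ne_zero_of_succ_eq_mul_sq he hx₀ hx n
    calc
      y (n + 1) / x (n + 1) = y n / x n + (x (n + 1))⁻¹ := by
        rw [hx, hy, mul_mul_add_one_div_mul_sq (he n) hxn]
      _ = y 0 / x 0 + ∑ i ∈ Finset.Icc 1 (n + 1), (x i)⁻¹ := by
        rw [ih, Finset.sum_Icc_succ_top n.succ_pos, add_assoc]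

/-- In `𝔽₂(t)`, for every `n ≥ 1`, `v n / u n = Σ_{i=1}^{n} 1 / u i`. -/
theorem v_div_u_eq_sum (ε : ℕ → Polynomial (ZMod 2)) (hε : ∀ n, 1 ≤ (ε n).natDegree)
    (n : ℕ) (hn : 1 ≤ n) :
    (algebraMap (Polynomial (ZMod 2)) (RatFunc (ZMod 2)) (v ε n)) /
        (algebraMap (Polynomial (ZMod 2)) (RatFunc (ZMod 2)) (u ε n)) =
      ∑ i ∈ Finset.Icc 1 n,
        (algebraMap (Polynomial (ZMod 2)) (RatFunc (ZMod 2)) (u ε i))⁻¹ := by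
  simpa [u, v] using v_div_u_eq_sum_general
    (e := fun k ↦ algebraMap _ (RatFunc (ZMod 2)) (ε k))
    (x := fun k ↦ algebraMap _ _ (u ε k)) (y := fun k ↦ algebraMap _ _ (v ε k))
    (fun k ↦ RatFunc.algebraMap_ne_zero (Polynomial.ne_zero_of_natDegree_gt (hε k)))
    (by simp [u]) (by simp [u]) (by simp [v]) n
end
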